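/- Let m and t be natural numbers with m ≥ 1, and fix a target index j ∈ Fin m. Under the uniform probability distribution on the finite set of all functions g : Fin t → Fin m (modeling t independent, uniformly random hash evaluations into a filter of m bits), the probability of the event that j lies in the range of g equals 1 - (1 - 1/m)^t. -/

import Mathlib

/-!
`Finset.dens` is the uniform probability of an event. No coordinate of `g` hits its target exactly
when `g` lies in the box of the complementary sets, and the density of a box is the product of the
densities of its sides.
-/

section

variable {α : Type*} [Fintype α] [DecidableEq α] [Nonempty α]

theorem dens_compl_add_dens (s : Finset α) : sᶜ.dens + s.dens = 1 := by
  rw [Finset.compl_eq_univ_sdiff, Finset.dens_sdiff_add_dens_eq_dens s.subset_univ,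
    Finset.dens_univ]

theorem nnratCast_dens_compl {K : Type*} [DivisionRing K] [CharZero K] (s : Finset α) :
    (sᶜ.dens : K) = 1 - s.dens := by
  rw [eq_sub_iff_add_eq, ← NNRat.cast_add, dens_compl_add_dens, NNRat.cast_one]

end

section

variable {ι : Type*} {α : ι → Type*} [Fintype ι] [DecidableEq ι] [∀ i, Fintype (α i)]

-- Independence of the coordinates under the uniform distribution.
theorem dens_piFinset (s : ∀ i, Finset (α i)) :
    (Fintype.piFinset s).dens = ∏ i, (s i).dens := by
  simp only [Finset.dens, Fintype.card_piFinset, Fintype.card_pi, Nat.cast_prod,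
    Finset.prod_div_distrib]

variable [∀ i, DecidableEq (α i)]

theorem compl_filter_exists_mem_eq_piFinset_compl (s : ∀ i, Finset (α i)) :
    ({g | ∃ i, g i ∈ s i} : Finset (∀ i, α i))ᶜ = Fintype.piFinset fun i ↦ (s i)ᶜ := by
  ext g
  simp

theorem bloom_bit_set_prob_general {K : Type*} [Field K] [CharZero K] [∀ i, Nonempty (α i)]
    (s : ∀ i, Finset (α i)) :
    (({g | ∃ i, g i ∈ s i} : Finset (∀ i, α i)).dens : K) = 1 - ∏ i, (1 - ((s i).dens : K)) :=
  calc (({g | ∃ i, g i ∈ s i} : Finset (∀ i, α i)).dens : K)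
    _ = 1 - (({g | ∃ i, g i ∈ s i} : Finset (∀ i, α i))ᶜ.dens : K) := by
      rw [nnratCast_dens_compl, sub_sub_cancel]
    _ = 1 - ∏ i, ((s i)ᶜ.dens : K) := by
      rw [compl_filter_exists_mem_eq_piFinset_compl, dens_piFinset, NNRat.cast_prod]
    _ = 1 - ∏ i, (1 - ((s i).dens : K)) := by simp only [nnratCast_dens_compl]

end

/-- Under the uniform distribution on all functions `g : Fin t → Fin m` (t independent
uniform hash evaluations into m bits), the probability that a fixed bit `j` lies in the
range of `g` equals `1 - (1 - 1/m)^t`. -/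
theorem bloom_bit_set_prob (m t : ℕ) (hm : 1 ≤ m) (j : Fin m) :
    ((Finset.univ.filter (fun g : Fin t → Fin m => ∃ i, g i = j)).card : ℝ) /
      (Fintype.card (Fin t → Fin m) : ℝ) = 1 - (1 - 1 / (m : ℝ)) ^ t := by
  have : Nonempty (Fin m) := ⟨j⟩
  simpa [Finset.nnratCast_dens] using
    bloom_bit_set_prob_general (K := ℝ) fun _ : Fin t ↦ ({j} : Finset (Fin m))
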